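/- arXiv:1706.03306 — 2 statements merged into one kernel-verified Lean document; each statement's English description precedes it below -/
import Mathlib

section
/- Let r ≥ 3 and let H be an r-uniform r-partite linear hypergraph containing no rainbow cycles of length three or four. Then H is G_r(8r−13, 8)-free. -/
open Finset

/-- A hypergraph `H` is `G_r(v,e)`-free if any `e` distinct edges span at least `v+1` vertices. -/
def GFree {V : Type*} [DecidableEq V] (H : Finset (Finset V)) (v e : ℕ) : Prop :=
  ∀ S ⊆ H, S.card = e → v + 1 ≤ (S.biUnion id).card

/-- `extremalF r n v e` is the maximum number of edges of a `G_r(v,e)`-free `r`-uniform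
hypergraph on `n` vertices. -/
noncomputable def extremalF (r n v e : ℕ) : ℕ :=
  sSup {m : ℕ | ∃ H : Finset (Finset (Fin n)),
    (∀ A ∈ H, A.card = r) ∧ GFree H v e ∧ H.card = m}
/-- `H` (an `r`-uniform `r`-partite hypergraph with parts given by `part`) contains a rainbow
cycle of length `k`: `k` distinct vertices and `k` distinct edges, with `vᵢ, vᵢ₊₁ ∈ Aᵢ`
(cyclically), and the `k` vertices lying in `k` distinct vertex parts. -/
def HasRainbowCycle {V : Type*} {r : ℕ} (H : Finset (Finset V)) (part : V → Fin r)
    (k : ℕ) : Prop :=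
  ∃ (v : Fin k → V) (A : Fin k → Finset V),
    Function.Injective v ∧ Function.Injective A ∧
    (∀ i, A i ∈ H) ∧
    (∀ i : Fin k, v i ∈ A i ∧ v (finRotate k i) ∈ A i) ∧
    Function.Injective (fun i => part (v i))


section core
variable {W C : Type*} (G : SimpleGraph W) (col : W → W → C)

def QuadCond : Prop :=
  (∀ a b, col a b = col b a) ∧ ∀ a b c d, G.Adj a b → G.Adj b c → G.Adj c d → G.Adj d a →
    a ≠ c → b ≠ d → col a b ≠ col b c ∧ (col a b = col c d ∨ col b c = col d a)

variable {G col}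

/-- the condition for two rows and two columns -/
lemma QuadCond.rows (h : QuadCond G col) {x y a b : W} (hxy : x ≠ y) (hab : a ≠ b)
    (h1 : G.Adj x a) (h2 : G.Adj x b) (h3 : G.Adj y a) (h4 : G.Adj y b) :
    col x a ≠ col y a ∧ col x b ≠ col y b ∧ col x a ≠ col x b ∧ col y a ≠ col y b ∧
      (col x a = col y b ∨ col x b = col y a) := by
  obtain ⟨hs, hq⟩ := h
  have e1 := hq x a y b h1 h3.symm h4 h2.symm hxy hab
  have e2 := hq a y b x h3.symm h4 h2.symm h1 hab hxy.symm
  have e3 := hq y b x a h4 h2.symm h1 h3.symm hxy.symm hab.symm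
  have e4 := hq b x a y h2.symm h1 h3.symm h4 hab.symm hxy
  rw [hs a y, hs b x] at *
  grind

lemma QuadCond.noK24 (h : QuadCond G col) {x y a b c d : W} (hxy : x ≠ y)
    (hab : a ≠ b) (hac : a ≠ c) (had : a ≠ d) (hbc : b ≠ c) (hbd : b ≠ d) (hcd : c ≠ d)
    (xa : G.Adj x a) (xb : G.Adj x b) (xc : G.Adj x c) (xd : G.Adj x d)
    (ya : G.Adj y a) (yb : G.Adj y b) (yc : G.Adj y c) (yd : G.Adj y d) : False := by
  obtain ⟨_, _, _, _, h1⟩ := h.rows hxy hab xa xb ya yb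
  obtain ⟨_, _, _, _, h2⟩ := h.rows hxy hac xa xc ya yc
  obtain ⟨_, _, _, _, h3⟩ := h.rows hxy had xa xd ya yd
  obtain ⟨_, _, _, _, h4⟩ := h.rows hxy hbc xb xc yb yc
  obtain ⟨_, _, _, _, h5⟩ := h.rows hxy hbd xb xd yb yd
  obtain ⟨_, _, _, _, h6⟩ := h.rows hxy hcd xc xd yc yd
  grind

/-- `K_{2,3}` is coloured by a cyclic shift -/
lemma QuadCond.k23 (h : QuadCond G col) {x y a b c : W} (hxy : x ≠ y)
    (hab : a ≠ b) (hac : a ≠ c) (hbc : b ≠ c)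
    (xa : G.Adj x a) (xb : G.Adj x b) (xc : G.Adj x c)
    (ya : G.Adj y a) (yb : G.Adj y b) (yc : G.Adj y c) :
    (col y a = col x b ∧ col y b = col x c ∧ col y c = col x a) ∨
    (col y a = col x c ∧ col y b = col x a ∧ col y c = col x b) := by
  obtain ⟨_, _, _, _, h1⟩ := h.rows hxy hab xa xb ya yb
  obtain ⟨_, _, _, _, h2⟩ := h.rows hxy hac xa xc ya yc
  obtain ⟨_, _, _, _, h4⟩ := h.rows hxy hbc xb xc yb yc
  grind

def D4 (a b c d : W) : Prop := a ≠ b ∧ a ≠ c ∧ a ≠ d ∧ b ≠ c ∧ b ≠ d ∧ c ≠ d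

lemma QuadCond.final (h : QuadCond G col) {u x y z a b c d : W}
    (hn : D4 u x y z ∧ D4 a b c d)
    (ua : G.Adj u a) (ub : G.Adj u b) (uc : G.Adj u c) (ud : G.Adj u d)
    (xb : G.Adj x b) (xc : G.Adj x c) (xd : G.Adj x d)
    (ya : G.Adj y a) (yc : G.Adj y c) (yd : G.Adj y d)
    (za : G.Adj z a) (zb : G.Adj z b) (zd : G.Adj z d) : False := by
  have hux : u ≠ x := by grind [D4]
  have huy : u ≠ y := by grind [D4]
  have huz : u ≠ z := by grind [D4]
  have hxy : x ≠ y := by grind [D4]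
  have hxz : x ≠ z := by grind [D4]
  have hyz : y ≠ z := by grind [D4]
  have hab : a ≠ b := by grind [D4]
  have hac : a ≠ c := by grind [D4]
  have had : a ≠ d := by grind [D4]
  have hbc : b ≠ c := by grind [D4]
  have hbd : b ≠ d := by grind [D4]
  have hcd : c ≠ d := by grind [D4]
  clear hn
  have k1 := h.k23 hux hbc hbd hcd ub uc ud xb xc xd
  have k2 := h.k23 huy hac had hcd ua uc ud ya yc yd
  have k3 := h.k23 huz hab had hbd ua ub ud za zb zd
  obtain ⟨_, p1, _, _, p2⟩ := h.rows hxy hcd xc xd yc yd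
  obtain ⟨_, q1, _, _, q2⟩ := h.rows hxz hbd xb xd zb zd
  obtain ⟨_, r1, _, _, r2⟩ := h.rows hyz had ya yd za zd
  obtain ⟨_, _, s1, _, _⟩ := h.rows hux hbc ub uc xb xc
  obtain ⟨_, _, s2, _, _⟩ := h.rows hux hbd ub ud xb xd
  obtain ⟨_, _, s3, _, _⟩ := h.rows hux hcd uc ud xc xd
  obtain ⟨_, _, s4, _, _⟩ := h.rows huy hac ua uc ya yc
  obtain ⟨_, _, s5, _, _⟩ := h.rows huy had ua ud ya yd
  obtain ⟨_, _, s6, _, _⟩ := h.rows huz hab ua ub za zb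
  rcases k1 with ⟨k11, k12, k13⟩ | ⟨k11, k12, k13⟩ <;>
  rcases k2 with ⟨k21, k22, k23⟩ | ⟨k21, k22, k23⟩ <;>
  rcases k3 with ⟨k31, k32, k33⟩ | ⟨k31, k32, k33⟩ <;>
  simp only [k11, k12, k13, k21, k22, k23, k31, k32, k33] at * <;> grind

def Three (G : SimpleGraph W) (x a b c d : W) : Prop :=
  (G.Adj x b ∧ G.Adj x c ∧ G.Adj x d) ∨ (G.Adj x a ∧ G.Adj x c ∧ G.Adj x d) ∨
  (G.Adj x a ∧ G.Adj x b ∧ G.Adj x d) ∨ (G.Adj x a ∧ G.Adj x b ∧ G.Adj x c)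

lemma QuadCond.kill (h : QuadCond G col) {u x y z a b c d : W}
    (hn : D4 u x y z ∧ D4 a b c d)
    (ub : G.Adj u b) (uc : G.Adj u c) (ud : G.Adj u d)
    (xb : G.Adj x b) (xc : G.Adj x c) (xd : G.Adj x d)
    (yb : G.Adj y b) (yc : G.Adj y c) (yd : G.Adj y d)
    (hz : Three G z a b c d) : False := by
  have hux : u ≠ x := by grind [D4]
  have huy : u ≠ y := by grind [D4]
  have huz : u ≠ z := by grind [D4]
  have hxy : x ≠ y := by grind [D4]
  have hxz : x ≠ z := by grind [D4]
  have hyz : y ≠ z := by grind [D4]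
  have hbc : b ≠ c := by grind [D4]
  have hbd : b ≠ d := by grind [D4]
  have hcd : c ≠ d := by grind [D4]
  have key : ∀ p q, p ≠ q → G.Adj u p → G.Adj u q → G.Adj x p → G.Adj x q → G.Adj y p →
      G.Adj y q → G.Adj z p → G.Adj z q → False := fun p q hpq h1 h2 h3 h4 h5 h6 h7 h8 =>
    h.noK24 hpq hux huy huz hxy hxz hyz h1.symm h3.symm h5.symm h7.symm
      h2.symm h4.symm h6.symm h8.symm
  rcases hz with ⟨h1, h2, h3⟩ | ⟨h1, h2, h3⟩ | ⟨h1, h2, h3⟩ | ⟨h1, h2, h3⟩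
  · exact key b c hbc ub uc xb xc yb yc h1 h2
  · exact key c d hcd uc ud xc xd yc yd h2 h3
  · exact key b d hbd ub ud xb xd yb yd h2 h3
  · exact key b c hbc ub uc xb xc yb yc h2 h3

lemma QuadCond.L2 (h : QuadCond G col) {u x y z a b c d : W}
    (hn : D4 u x y z ∧ D4 a b c d)
    (ua : G.Adj u a) (ub : G.Adj u b) (uc : G.Adj u c) (ud : G.Adj u d)
    (xb : G.Adj x b) (xc : G.Adj x c) (xd : G.Adj x d)
    (ya : G.Adj y a) (yc : G.Adj y c) (yd : G.Adj y d)
    (hz : Three G z a b c d) : False := by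
  rcases hz with ⟨h1, h2, h3⟩ | ⟨h1, h2, h3⟩ | ⟨h1, h2, h3⟩ | ⟨h1, h2, h3⟩
  · exact h.kill (u := u) (x := x) (y := z) (z := y) (a := a) (b := b) (c := c) (d := d)
      (by grind [D4]) ub uc ud xb xc xd h1 h2 h3 (by unfold Three; tauto)
  · exact h.kill (u := u) (x := y) (y := z) (z := x) (a := b) (b := a) (c := c) (d := d)
      (by grind [D4]) ua uc ud ya yc yd h1 h2 h3 (by unfold Three; tauto)
  · exact h.final hn ua ub uc ud xb xc xd ya yc yd h1 h2 h3
  · exact h.final (a := a) (b := b) (c := d) (d := c) (by grind [D4])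
      ua ub ud uc xb xd xc ya yd yc h1 h2 h3

lemma QuadCond.L1 (h : QuadCond G col) {u x y z a b c d : W}
    (hn : D4 u x y z ∧ D4 a b c d)
    (ua : G.Adj u a) (ub : G.Adj u b) (uc : G.Adj u c) (ud : G.Adj u d)
    (xb : G.Adj x b) (xc : G.Adj x c) (xd : G.Adj x d)
    (hy : Three G y a b c d)
    (hz : Three G z a b c d) : False := by
  rcases hy with ⟨h1, h2, h3⟩ | ⟨h1, h2, h3⟩ | ⟨h1, h2, h3⟩ | ⟨h1, h2, h3⟩
  · exact h.kill hn ub uc ud xb xc xd h1 h2 h3 hz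
  · exact h.L2 hn ua ub uc ud xb xc xd h1 h2 h3 hz
  · exact h.L2 (z := z) (a := a) (b := c) (c := b) (d := d) (by grind [D4])
      ua uc ub ud xc xb xd h1 h2 h3 (by unfold Three at *; tauto)
  · exact h.L2 (z := z) (a := a) (b := d) (c := b) (d := c) (by grind [D4])
      ua ud ub uc xd xb xc h1 h2 h3 (by unfold Three at *; tauto)

lemma QuadCond.L0 (h : QuadCond G col) {u x y z a b c d : W}
    (hn : D4 u x y z ∧ D4 a b c d)
    (ua : G.Adj u a) (ub : G.Adj u b) (uc : G.Adj u c) (ud : G.Adj u d)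
    (hx : Three G x a b c d)
    (hy : Three G y a b c d)
    (hz : Three G z a b c d) : False := by
  rcases hx with ⟨h1, h2, h3⟩ | ⟨h1, h2, h3⟩ | ⟨h1, h2, h3⟩ | ⟨h1, h2, h3⟩
  · exact h.L1 hn ua ub uc ud h1 h2 h3 hy hz
  · exact h.L1 (y := y) (z := z) (a := b) (b := a) (c := c) (d := d) (by grind [D4])
      ub ua uc ud h1 h2 h3 (by unfold Three at *; tauto) (by unfold Three at *; tauto)
  · exact h.L1 (y := y) (z := z) (a := c) (b := a) (c := b) (d := d) (by grind [D4])
      uc ua ub ud h1 h2 h3 (by unfold Three at *; tauto) (by unfold Three at *; tauto)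
  · exact h.L1 (y := y) (z := z) (a := d) (b := a) (c := b) (d := c) (by grind [D4])
      ud ua ub uc h1 h2 h3 (by unfold Three at *; tauto) (by unfold Three at *; tauto)

open Classical in
noncomputable def bb (G : SimpleGraph W) (x y : W) : ℕ := if G.Adj x y then 1 else 0

lemma bb_symm (x y : W) : bb G x y = bb G y x := by
  unfold bb; rw [G.adj_comm]
lemma bb_self (x : W) : bb G x x = 0 := by simp [bb]
lemma bb_le (x y : W) : bb G x y ≤ 1 := by unfold bb; split_ifs <;> simp
lemma bb_one {x y : W} : bb G x y = 1 ↔ G.Adj x y := by simp [bb]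
lemma bb_pos {x y : W} : 1 ≤ bb G x y ↔ G.Adj x y := by unfold bb; split_ifs <;> simp [*]

lemma bb_tri (ht : ∀ a b c, G.Adj a b → G.Adj b c → G.Adj a c → False) (x y z : W) :
    bb G x y + bb G y z + bb G x z ≤ 2 := by
  have h1 := bb_le (G := G) x y
  have h2 := bb_le (G := G) y z
  have h3 := bb_le (G := G) x z
  by_contra hh
  exact ht x y z (bb_pos.1 (by omega)) (bb_pos.1 (by omega)) (bb_pos.1 (by omega))

lemma bb_k24 (h : QuadCond G col) {x y a b c d : W} (hxy : x ≠ y)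
    (hab : a ≠ b) (hac : a ≠ c) (had : a ≠ d) (hbc : b ≠ c) (hbd : b ≠ d) (hcd : c ≠ d) :
    bb G x a + bb G x b + bb G x c + bb G x d + bb G y a + bb G y b + bb G y c + bb G y d
      ≤ 7 := by
  have h1 := bb_le (G := G) x a
  have h2 := bb_le (G := G) x b
  have h3 := bb_le (G := G) x c
  have h4 := bb_le (G := G) x d
  have h5 := bb_le (G := G) y a
  have h6 := bb_le (G := G) y b
  have h7 := bb_le (G := G) y c
  have h8 := bb_le (G := G) y d
  by_contra hh
  exact h.noK24 hxy hab hac had hbc hbd hcd (bb_pos.1 (by omega)) (bb_pos.1 (by omega))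
    (bb_pos.1 (by omega)) (bb_pos.1 (by omega)) (bb_pos.1 (by omega)) (bb_pos.1 (by omega))
    (bb_pos.1 (by omega)) (bb_pos.1 (by omega))

end core

lemma num_path (x1 x2 x3 x4 y1 y2 y3 y4 z1 z2 z3 z4 : ℕ)
    (h1 : x1 + y1 ≤ 1) (h2 : x2 + y2 ≤ 1) (h3 : x3 + y3 ≤ 1) (h4 : x4 + y4 ≤ 1)
    (k1 : y1 + z1 ≤ 1) (k2 : y2 + z2 ≤ 1) (k3 : y3 + z3 ≤ 1) (k4 : y4 + z4 ≤ 1)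
    (hx : x1 + x2 + x3 + x4 ≤ 3) (hz : z1 + z2 + z3 + z4 ≤ 3)
    (l1 : x2 + x3 + x4 + z2 + z3 + z4 ≤ 5) (l2 : x1 + x3 + x4 + z1 + z3 + z4 ≤ 5)
    (l3 : x1 + x2 + x4 + z1 + z2 + z4 ≤ 5) (l4 : x1 + x2 + x3 + z1 + z2 + z3 ≤ 5) :
    x1 + x2 + x3 + x4 + (y1 + y2 + y3 + y4) + (z1 + z2 + z3 + z4) ≤ 6 := by
  have a1 : y1 ≤ 1 := by omega
  have a2 : y2 ≤ 1 := by omega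
  have a3 : y3 ≤ 1 := by omega
  have a4 : y4 ≤ 1 := by omega
  interval_cases y1 <;> interval_cases y2 <;> interval_cases y3 <;> interval_cases y4 <;> omega

section count
set_option linter.unusedSectionVars false
variable {W C : Type*} [Fintype W] {G : SimpleGraph W} {col : W → W → C}

lemma surj_bij (hc : Fintype.card W = 8) (f : Fin 8 → W) (hf : Function.Surjective f) :
    Function.Bijective f :=
  (Fintype.bijective_iff_surjective_and_card f).2 ⟨hf, by simp [hc]⟩

lemma sum_eq (f : Fin 8 → W) (hf : Function.Bijective f) :
    ∑ v, ∑ w, bb G v w = 2 * (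
    bb G (f 0) (f 1) + bb G (f 0) (f 2) + bb G (f 0) (f 3) + bb G (f 0) (f 4) + bb G (f 0) (f 5) + bb G (f 0) (f 6) + bb G (f 0) (f 7) + 
    bb G (f 1) (f 2) + bb G (f 1) (f 3) + bb G (f 1) (f 4) + bb G (f 1) (f 5) + bb G (f 1) (f 6) + bb G (f 1) (f 7) + 
    bb G (f 2) (f 3) + bb G (f 2) (f 4) + bb G (f 2) (f 5) + bb G (f 2) (f 6) + bb G (f 2) (f 7) + 
    bb G (f 3) (f 4) + bb G (f 3) (f 5) + bb G (f 3) (f 6) + bb G (f 3) (f 7) + 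
    bb G (f 4) (f 5) + bb G (f 4) (f 6) + bb G (f 4) (f 7) + 
    bb G (f 5) (f 6) + bb G (f 5) (f 7) + 
    bb G (f 6) (f 7)) := by
  have e : ∑ v, ∑ w, bb G v w = ∑ i, ∑ j, bb G (f i) (f j) := by
    rw [← hf.sum_comp]
    exact Finset.sum_congr rfl fun i _ => (hf.sum_comp _).symm
  rw [e]
  simp only [Fin.sum_univ_eight, bb_self]
  rw [bb_symm (f 1) (f 0), bb_symm (f 2) (f 0), bb_symm (f 2) (f 1), bb_symm (f 3) (f 0),
    bb_symm (f 3) (f 1), bb_symm (f 3) (f 2), bb_symm (f 4) (f 0), bb_symm (f 4) (f 1), bb_symm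
    (f 4) (f 2), bb_symm (f 4) (f 3), bb_symm (f 5) (f 0), bb_symm (f 5) (f 1), bb_symm (f 5) (f
    2), bb_symm (f 5) (f 3), bb_symm (f 5) (f 4), bb_symm (f 6) (f 0), bb_symm (f 6) (f 1),
    bb_symm (f 6) (f 2), bb_symm (f 6) (f 3), bb_symm (f 6) (f 4), bb_symm (f 6) (f 5), bb_symm
    (f 7) (f 0), bb_symm (f 7) (f 1), bb_symm (f 7) (f 2), bb_symm (f 7) (f 3), bb_symm (f 7) (f
    4), bb_symm (f 7) (f 5), bb_symm (f 7) (f 6)]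
  ring

/-- no edges inside a neighbourhood -/
lemma bb_zero (ht : ∀ a b c, G.Adj a b → G.Adj b c → G.Adj a c → False) {u a b : W}
    (h1 : G.Adj u a) (h2 : G.Adj u b) : bb G a b = 0 := by
  have := bb_tri ht u a b
  rw [bb_one.2 h1, bb_one.2 h2] at this
  omega

lemma bb_four (h : QuadCond G col) {u x a b c d : W} (hu : u ≠ x)
    (hn : D4 a b c d)
    (h1 : G.Adj u a) (h2 : G.Adj u b) (h3 : G.Adj u c) (h4 : G.Adj u d) :
    bb G x a + bb G x b + bb G x c + bb G x d ≤ 3 := by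
  obtain ⟨n1, n2, n3, n4, n5, n6⟩ := hn
  have := bb_k24 h hu n1 n2 n3 n4 n5 n6
  rw [bb_one.2 h1, bb_one.2 h2, bb_one.2 h3, bb_one.2 h4] at this
  omega

/-- disjoint neighbourhoods of adjacent vertices -/
lemma bb_disj (ht : ∀ a b c, G.Adj a b → G.Adj b c → G.Adj a c → False) {x y : W}
    (h1 : G.Adj x y) (a : W) : bb G a x + bb G a y ≤ 1 := by
  have := bb_tri ht a x y
  rw [bb_one.2 h1] at this
  omega

lemma three_of (x a b c d : W) (h : 3 ≤ bb G a x + bb G b x + bb G c x + bb G d x) :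
    Three G x a b c d := by
  rw [bb_symm a, bb_symm b, bb_symm c, bb_symm d] at h
  have h1 := bb_le (G := G) x a
  have h2 := bb_le (G := G) x b
  have h3 := bb_le (G := G) x c
  have h4 := bb_le (G := G) x d
  unfold Three
  simp only [← bb_one]
  omega

lemma case5 (h : QuadCond G col)
    (ht : ∀ a b c, G.Adj a b → G.Adj b c → G.Adj a c → False)
    (f : Fin 8 → W) (hf : Function.Bijective f)
    (h1 : G.Adj (f 0) (f 1)) (h2 : G.Adj (f 0) (f 2)) (h3 : G.Adj (f 0) (f 3))
    (h4 : G.Adj (f 0) (f 4)) (h5 : G.Adj (f 0) (f 5)) :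
    ∑ v, ∑ w, bb G v w ≤ 24 := by
  have hne : ∀ i j, i ≠ j → f i ≠ f j := fun i j hij e => hij (hf.1 e)
  have d4 : ∀ a b c d, D4 a b c d → D4 (f a) (f b) (f c) (f d) :=
    fun a b c d ⟨n1, n2, n3, n4, n5, n6⟩ => ⟨hne _ _ n1, hne _ _ n2, hne _ _ n3, hne _ _ n4,
      hne _ _ n5, hne _ _ n6⟩
  rw [sum_eq f hf]
  have z12 := bb_zero ht h1 h2
  have z13 := bb_zero ht h1 h3
  have z14 := bb_zero ht h1 h4
  have z15 := bb_zero ht h1 h5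
  have z23 := bb_zero ht h2 h3
  have z24 := bb_zero ht h2 h4
  have z25 := bb_zero ht h2 h5
  have z34 := bb_zero ht h3 h4
  have z35 := bb_zero ht h3 h5
  have z45 := bb_zero ht h4 h5
  have b01 := bb_one.2 h1
  have b02 := bb_one.2 h2
  have b03 := bb_one.2 h3
  have b04 := bb_one.2 h4
  have b05 := bb_one.2 h5
  have key : ∀ k, 5 < k → bb G (f 0) (f k) + (bb G (f 1) (f k) + bb G (f 2) (f k) +
      bb G (f 3) (f k) + bb G (f 4) (f k) + bb G (f 5) (f k)) ≤ 3 := by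
    intro k hk
    by_cases h0 : G.Adj (f 0) (f k)
    · rw [bb_one.2 h0, bb_zero ht h1 h0, bb_zero ht h2 h0, bb_zero ht h3 h0, bb_zero ht h4 h0,
        bb_zero ht h5 h0]
      omega
    · have hk0 : f 0 ≠ f k := hne _ _ (by omega)
      have e0 : bb G (f 0) (f k) = 0 := by simp [bb, h0]
      have a1 := bb_four h hk0 (d4 1 2 3 4 (by simp [D4])) h1 h2 h3 h4
      have a2 := bb_four h hk0 (d4 1 2 3 5 (by simp [D4])) h1 h2 h3 h5
      have a3 := bb_four h hk0 (d4 1 2 4 5 (by simp [D4])) h1 h2 h4 h5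
      have a4 := bb_four h hk0 (d4 1 3 4 5 (by simp [D4])) h1 h3 h4 h5
      have a5 := bb_four h hk0 (d4 2 3 4 5 (by simp [D4])) h2 h3 h4 h5
      rw [bb_symm (f 1), bb_symm (f 2), bb_symm (f 3), bb_symm (f 4), bb_symm (f 5)]
      omega
  have k6 := key 6 (by decide)
  have k7 := key 7 (by decide)
  have b67 := bb_le (G := G) (f 6) (f 7)
  omega

lemma case4 (h : QuadCond G col)
    (ht : ∀ a b c, G.Adj a b → G.Adj b c → G.Adj a c → False)
    (f : Fin 8 → W) (hf : Function.Bijective f)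
    (h1 : G.Adj (f 0) (f 1)) (h2 : G.Adj (f 0) (f 2)) (h3 : G.Adj (f 0) (f 3))
    (h4 : G.Adj (f 0) (f 4)) (h5 : ¬ G.Adj (f 0) (f 5)) (h6 : ¬ G.Adj (f 0) (f 6))
    (h7 : ¬ G.Adj (f 0) (f 7)) :
    ∑ v, ∑ w, bb G v w ≤ 24 := by
  have hne : ∀ i j, i ≠ j → f i ≠ f j := fun i j hij e => hij (hf.1 e)
  have d4 : ∀ a b c d, D4 a b c d → D4 (f a) (f b) (f c) (f d) :=
    fun a b c d ⟨n1, n2, n3, n4, n5, n6⟩ => ⟨hne _ _ n1, hne _ _ n2, hne _ _ n3, hne _ _ n4,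
      hne _ _ n5, hne _ _ n6⟩
  rw [sum_eq f hf]
  have z12 := bb_zero ht h1 h2
  have z13 := bb_zero ht h1 h3
  have z14 := bb_zero ht h1 h4
  have z23 := bb_zero ht h2 h3
  have z24 := bb_zero ht h2 h4
  have z34 := bb_zero ht h3 h4
  have b01 := bb_one.2 h1
  have b02 := bb_one.2 h2
  have b03 := bb_one.2 h3
  have b04 := bb_one.2 h4
  have b05 : bb G (f 0) (f 5) = 0 := by simp [bb, h5]
  have b06 : bb G (f 0) (f 6) = 0 := by simp [bb, h6]
  have b07 : bb G (f 0) (f 7) = 0 := by simp [bb, h7]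
  have key : ∀ k, 0 ≠ k → bb G (f 1) (f k) + bb G (f 2) (f k) +
      bb G (f 3) (f k) + bb G (f 4) (f k) ≤ 3 := by
    intro k hk
    rw [bb_symm (f 1), bb_symm (f 2), bb_symm (f 3), bb_symm (f 4)]
    exact bb_four h (hne _ _ hk) (d4 1 2 3 4 (by simp [D4])) h1 h2 h3 h4
  have k5 := key 5 (by decide)
  have k6 := key 6 (by decide)
  have k7 := key 7 (by decide)
  have tri := bb_tri ht (f 5) (f 6) (f 7)
  have b56 := bb_le (G := G) (f 5) (f 6)
  have b57 := bb_le (G := G) (f 5) (f 7)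
  have b67 := bb_le (G := G) (f 6) (f 7)
  have path : ∀ x y z : Fin 8, 4 < x → 4 < y → 4 < z → x ≠ y → y ≠ z → x ≠ z →
      G.Adj (f x) (f y) → G.Adj (f y) (f z) →
      bb G (f 1) (f x) + bb G (f 2) (f x) + bb G (f 3) (f x) + bb G (f 4) (f x) +
      (bb G (f 1) (f y) + bb G (f 2) (f y) + bb G (f 3) (f y) + bb G (f 4) (f y)) +
      (bb G (f 1) (f z) + bb G (f 2) (f z) + bb G (f 3) (f z) + bb G (f 4) (f z)) ≤ 6 := by
    intro x y z hx hy hz nxy nyz nxz axy ayz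
    have kk : ∀ a b c : Fin 8, a < 5 → b < 5 → c < 5 → a ≠ b → a ≠ c → b ≠ c →
        bb G (f a) (f x) + bb G (f b) (f x) + bb G (f c) (f x) +
        bb G (f a) (f z) + bb G (f b) (f z) + bb G (f c) (f z) ≤ 5 := by
      intro a b c ha hb hc nab nac nbc
      have := bb_k24 h (hne _ _ nxz) (hne _ _ nab) (hne _ _ nac)
        (hne a y (by omega)) (hne _ _ nbc) (hne b y (by omega)) (hne c y (by omega))
      rw [bb_one.2 axy, bb_one.2 ayz.symm] at this
      rw [bb_symm (f a), bb_symm (f b), bb_symm (f c), bb_symm (f a), bb_symm (f b),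
        bb_symm (f c)]
      omega
    exact num_path _ _ _ _ _ _ _ _ _ _ _ _ (bb_disj ht axy _) (bb_disj ht axy _)
      (bb_disj ht axy _) (bb_disj ht axy _) (bb_disj ht ayz _) (bb_disj ht ayz _)
      (bb_disj ht ayz _) (bb_disj ht ayz _) (key x (by omega)) (key z (by omega))
      (kk 2 3 4 (by decide) (by decide) (by decide) (by decide) (by decide) (by decide))
      (kk 1 3 4 (by decide) (by decide) (by decide) (by decide) (by decide) (by decide))
      (kk 1 2 4 (by decide) (by decide) (by decide) (by decide) (by decide) (by decide))
      (kk 1 2 3 (by decide) (by decide) (by decide) (by decide) (by decide) (by decide))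
  have disj : ∀ x y, G.Adj (f x) (f y) →
      bb G (f 1) (f x) + bb G (f 2) (f x) + bb G (f 3) (f x) + bb G (f 4) (f x) +
      (bb G (f 1) (f y) + bb G (f 2) (f y) + bb G (f 3) (f y) + bb G (f 4) (f y)) ≤ 4 := by
    intro x y hxy
    have e1 := bb_disj ht hxy (f 1)
    have e2 := bb_disj ht hxy (f 2)
    have e3 := bb_disj ht hxy (f 3)
    have e4 := bb_disj ht hxy (f 4)
    omega
  by_cases p : G.Adj (f 5) (f 6)
  · have := disj 5 6 p
    by_cases q : G.Adj (f 6) (f 7)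
    · have := path 5 6 7 (by decide) (by decide) (by decide) (by decide) (by decide)
        (by decide) p q
      omega
    · by_cases t : G.Adj (f 5) (f 7)
      · have := path 6 5 7 (by decide) (by decide) (by decide) (by decide) (by decide)
          (by decide) p.symm t
        omega
      · have q0 : bb G (f 6) (f 7) = 0 := by simp [bb, q]
        have t0 : bb G (f 5) (f 7) = 0 := by simp [bb, t]
        omega
  · have p0 : bb G (f 5) (f 6) = 0 := by simp [bb, p]
    by_cases q : G.Adj (f 6) (f 7)
    · have := disj 6 7 q
      by_cases t : G.Adj (f 5) (f 7)
      · have := path 5 7 6 (by decide) (by decide) (by decide) (by decide) (by decide)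
          (by decide) t q.symm
        omega
      · have t0 : bb G (f 5) (f 7) = 0 := by simp [bb, t]
        omega
    · have q0 : bb G (f 6) (f 7) = 0 := by simp [bb, q]
      by_cases t : G.Adj (f 5) (f 7)
      · have := disj 5 7 t
        omega
      · have t0 : bb G (f 5) (f 7) = 0 := by simp [bb, t]
        by_contra hcon
        exact h.L0 ⟨d4 0 5 6 7 (by simp [D4]), d4 1 2 3 4 (by simp [D4])⟩ h1 h2 h3 h4
          (three_of _ _ _ _ _ (by omega)) (three_of _ _ _ _ _ (by omega))
          (three_of _ _ _ _ _ (by omega))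

lemma core_bound (h : QuadCond G col) (hc : Fintype.card W = 8)
    (ht : ∀ a b c, G.Adj a b → G.Adj b c → G.Adj a c → False) :
    ∑ v, ∑ w, bb G v w ≤ 24 := by
  classical
  have hd : ∀ u, ∑ w, bb G u w = #(univ.filter fun w => G.Adj u w) := by
    intro u
    simp only [bb, Finset.card_filter]
  by_cases h5 : ∃ u, 5 ≤ #(univ.filter fun w => G.Adj u w)
  · obtain ⟨u, hu⟩ := h5
    obtain ⟨T, hT, hT5⟩ := Finset.exists_subset_card_eq hu
    have huT : u ∉ T := fun hh => by simpa using hT hh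
    have hA : ∀ t ∈ T, G.Adj u t := fun t ht => by simpa using hT ht
    have hR : #((insert u T)ᶜ) = 2 := by
      rw [Finset.card_compl, Finset.card_insert_of_notMem huT, hT5, hc]
    obtain ⟨x, y, -, hxy⟩ := Finset.card_eq_two.1 hR
    obtain ⟨a, T1, -, rfl, hT1⟩ := Finset.card_eq_succ.1 hT5
    obtain ⟨b, T2, -, rfl, hT2⟩ := Finset.card_eq_succ.1 hT1
    obtain ⟨c, d, e, -, -, -, rfl⟩ := Finset.card_eq_three.1 hT2
    refine case5 h ht ![u, a, b, c, d, e, x, y] (surj_bij hc _ ?_) (hA _ (by simp))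
      (hA _ (by simp)) (hA _ (by simp)) (hA _ (by simp)) (hA _ (by simp))
    intro w
    by_cases hw : w ∈ (insert u (insert a (insert b {c, d, e})) : Finset W)
    · simp only [mem_insert, mem_singleton] at hw
      rcases hw with rfl | rfl | rfl | rfl | rfl | rfl
      exacts [⟨0, rfl⟩, ⟨1, rfl⟩, ⟨2, rfl⟩, ⟨3, rfl⟩, ⟨4, rfl⟩, ⟨5, rfl⟩]
    · rw [← Finset.mem_compl, hxy] at hw
      simp only [mem_insert, mem_singleton] at hw
      rcases hw with rfl | rfl
      exacts [⟨6, rfl⟩, ⟨7, rfl⟩]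
  by_cases h4 : ∃ u, 4 ≤ #(univ.filter fun w => G.Adj u w)
  · obtain ⟨u, hu⟩ := h4
    have hT5 : #(univ.filter fun w => G.Adj u w) = 4 := by
      have : ¬ 5 ≤ #(univ.filter fun w => G.Adj u w) := fun hh => h5 ⟨u, hh⟩
      omega
    have hA : ∀ t, G.Adj u t ↔ t ∈ univ.filter fun w => G.Adj u w := fun t => by simp
    have huT : u ∉ univ.filter fun w => G.Adj u w := by simp
    generalize (univ.filter fun w => G.Adj u w) = T at *
    have hR : #((insert u T)ᶜ) = 3 := by
      rw [Finset.card_compl, Finset.card_insert_of_notMem huT, hT5, hc]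
    obtain ⟨x, y, z, -, -, -, hxy⟩ := Finset.card_eq_three.1 hR
    have hN : ∀ t ∈ (insert u T)ᶜ, ¬ G.Adj u t := fun t ht => by
      rw [hA]; simp at ht; tauto
    have hx := hN x (by simp [hxy])
    have hy := hN y (by simp [hxy])
    have hz := hN z (by simp [hxy])
    obtain ⟨a, T1, -, rfl, hT1⟩ := Finset.card_eq_succ.1 hT5
    obtain ⟨b, c, d, -, -, -, rfl⟩ := Finset.card_eq_three.1 hT1
    refine case4 h ht ![u, a, b, c, d, x, y, z] (surj_bij hc _ ?_) ((hA _).2 (by simp))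
      ((hA _).2 (by simp)) ((hA _).2 (by simp)) ((hA _).2 (by simp)) hx hy hz
    intro w
    by_cases hw : w ∈ (insert u (insert a {b, c, d}) : Finset W)
    · simp only [mem_insert, mem_singleton] at hw
      rcases hw with rfl | rfl | rfl | rfl | rfl
      exacts [⟨0, rfl⟩, ⟨1, rfl⟩, ⟨2, rfl⟩, ⟨3, rfl⟩, ⟨4, rfl⟩]
    · rw [← Finset.mem_compl, hxy] at hw
      simp only [mem_insert, mem_singleton] at hw
      rcases hw with rfl | rfl | rfl
      exacts [⟨5, rfl⟩, ⟨6, rfl⟩, ⟨7, rfl⟩]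
  · calc ∑ v, ∑ w, bb G v w ≤ ∑ v : W, 3 := Finset.sum_le_sum fun v _ => by
          rw [hd]
          by_contra hh
          exact h4 ⟨v, by omega⟩
      _ = 24 := by simp [hc]

end count

lemma part_inj {V : Type*} [DecidableEq V] {r : ℕ} {H : Finset (Finset V)} {part : V → Fin r}
    (hpart : ∀ A ∈ H, ∀ i : Fin r, (A.filter fun x => part x = i).card = 1)
    {A : Finset V} (hA : A ∈ H) {v w : V} (hv : v ∈ A) (hw : w ∈ A) (hvw : v ≠ w) :
    part v ≠ part w := by
  intro e
  obtain ⟨x, hx⟩ := Finset.card_eq_one.1 (hpart A hA (part w))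
  have h1 : v ∈ ({x} : Finset V) := by rw [← hx]; simp [hv, e]
  have h2 : w ∈ ({x} : Finset V) := by rw [← hx]; simp [hw]
  simp at h1 h2
  exact hvw (h1.trans h2.symm)

lemma lin_uniq {V : Type*} [DecidableEq V] {H : Finset (Finset V)}
    (hlin : ∀ A ∈ H, ∀ B ∈ H, A ≠ B → (A ∩ B).card ≤ 1)
    {A B : Finset V} (hA : A ∈ H) (hB : B ∈ H) (hAB : A ≠ B) {v w : V}
    (h1 : v ∈ A) (h2 : v ∈ B) (h3 : w ∈ A) (h4 : w ∈ B) : v = w :=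
  Finset.card_le_one.1 (hlin A hA B hB hAB) v (by simp [*]) w (by simp [*])

lemma tri_eq {V : Type*} [DecidableEq V] {r : ℕ} {H : Finset (Finset V)} {part : V → Fin r}
    (hpart : ∀ A ∈ H, ∀ i : Fin r, (A.filter fun x => part x = i).card = 1)
    (hlin : ∀ A ∈ H, ∀ B ∈ H, A ≠ B → (A ∩ B).card ≤ 1)
    (h3 : ¬ HasRainbowCycle H part 3)
    {A B C : Finset V} (hA : A ∈ H) (hB : B ∈ H) (hC : C ∈ H) (hAB : A ≠ B) (hBC : B ≠ C)
    (hAC : A ≠ C) {v w t : V} (vA : v ∈ A) (vB : v ∈ B) (wB : w ∈ B) (wC : w ∈ C)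
    (tC : t ∈ C) (tA : t ∈ A) : v = w ∧ w = t := by
  by_cases hvw : v = w
  · subst hvw
    exact ⟨rfl, lin_uniq hlin hA hC hAC vA wC tA tC⟩
  exfalso
  have hwt : w ≠ t := by
    rintro rfl
    exact hvw (lin_uniq hlin hA hB hAB vA vB tA wB)
  have htv : t ≠ v := by
    rintro rfl
    exact hvw (lin_uniq hlin hB hC hBC vB tC wB wC)
  have p1 := part_inj hpart hA tA vA htv
  have p2 := part_inj hpart hB vB wB hvw
  have p3 := part_inj hpart hC wC tC hwt
  apply h3
  refine ⟨![t, v, w], ![A, B, C], ?_, ?_, ?_, ?_, ?_⟩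
  · intro i j; fin_cases i <;> fin_cases j <;> simp <;> grind
  · intro i j; fin_cases i <;> fin_cases j <;> simp <;> grind
  · intro i; fin_cases i <;> simp [*]
  · intro i
    fin_cases i
    · exact ⟨tA, vA⟩
    · exact ⟨vB, wB⟩
    · exact ⟨wC, tC⟩
  · intro i j; fin_cases i <;> fin_cases j <;> simp <;> grind

lemma quad_eq {V : Type*} [DecidableEq V] {r : ℕ} {H : Finset (Finset V)} {part : V → Fin r}
    (hpart : ∀ A ∈ H, ∀ i : Fin r, (A.filter fun x => part x = i).card = 1)
    (h4 : ¬ HasRainbowCycle H part 4)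
    {A B C D : Finset V} (hA : A ∈ H) (hB : B ∈ H) (hC : C ∈ H) (hD : D ∈ H)
    (hn : D4 A B C D) {v w s t : V} (vA : v ∈ A) (vB : v ∈ B) (wB : w ∈ B) (wC : w ∈ C)
    (sC : s ∈ C) (sD : s ∈ D) (tD : t ∈ D) (tA : t ∈ A) (hne : D4 v w s t) :
    part v ≠ part w ∧ (part v = part s ∨ part w = part t) := by
  obtain ⟨m1, m2, m3, m4, m5, m6⟩ := hn
  obtain ⟨n1, n2, n3, n4, n5, n6⟩ := hne
  have p1 := part_inj hpart hA tA vA n3.symm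
  have p2 := part_inj hpart hB vB wB n1
  have p3 := part_inj hpart hC wC sC n4
  have p4 := part_inj hpart hD sD tD n6
  refine ⟨p2, ?_⟩
  by_contra hcon
  push Not at hcon
  obtain ⟨c1, c2⟩ := hcon
  apply h4
  refine ⟨![t, v, w, s], ![A, B, C, D], ?_, ?_, ?_, ?_, ?_⟩
  · intro i j; fin_cases i <;> fin_cases j <;> simp <;> grind
  · intro i j; fin_cases i <;> fin_cases j <;> simp <;> grind
  · intro i; fin_cases i <;> simp [*]
  · intro i
    fin_cases i
    · exact ⟨tA, vA⟩
    · exact ⟨vB, wB⟩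
    · exact ⟨wC, sC⟩
    · exact ⟨sD, tD⟩
  · intro i j; fin_cases i <;> fin_cases j <;> simp <;> grind

def starGr {V : Type*} (S : Finset (Finset V)) (c : V → {A // A ∈ S}) :
    SimpleGraph {A // A ∈ S} where
  Adj A B := A ≠ B ∧ ∃ v, v ∈ A.1 ∧ v ∈ B.1 ∧ (A = c v ∨ B = c v)
  symm := ⟨fun _ _ ⟨h, v, h1, h2, h3⟩ => ⟨h.symm, v, h2, h1, h3.symm⟩⟩
  loopless := ⟨fun _ h => h.1 rfl⟩

set_option maxHeartbeats 1000000 in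
theorem gfree8_of_no_rainbow {V : Type*} [DecidableEq V] (r : ℕ) (hr : 3 ≤ r)
    (H : Finset (Finset V)) (part : V → Fin r)
    (hpart : ∀ A ∈ H, ∀ i : Fin r, (A.filter fun x => part x = i).card = 1)
    (hlin : ∀ A ∈ H, ∀ B ∈ H, A ≠ B → (A ∩ B).card ≤ 1)
    (h3 : ¬ HasRainbowCycle H part 3) (h4 : ¬ HasRainbowCycle H part 4) :
    GFree H (8 * r - 13) 8 := by
  classical
  intro S hS hS8
  by_contra hcon
  have hW : Fintype.card {A // A ∈ S} = 8 := by simp [hS8]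
  have hmem : ∀ A : {A // A ∈ S}, A.1 ∈ H := fun A => hS A.2
  have hne : ∀ {A B : {A // A ∈ S}}, A ≠ B → A.1 ≠ B.1 := fun h e => h (Subtype.ext e)
  have hWn : Nonempty {A // A ∈ S} := Fintype.card_pos_iff.1 (by omega)
  have hcard : ∀ A : {A // A ∈ S}, A.1.card = r := by
    intro A
    have := Finset.card_eq_sum_card_fiberwise (s := A.1) (t := (univ : Finset (Fin r)))
      (f := part) (fun _ _ => by simp)
    rw [this, Finset.sum_congr rfl fun i _ => hpart A.1 (hmem A) i]
    simp
  have hex : ∀ v, ∃ A : {A // A ∈ S}, v ∈ S.biUnion id → v ∈ A.1 := by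
    intro v
    by_cases hv : v ∈ S.biUnion id
    · obtain ⟨A, hA, hvA⟩ := Finset.mem_biUnion.1 hv
      exact ⟨⟨A, hA⟩, fun _ => hvA⟩
    · exact ⟨hWn.some, fun h => absurd h hv⟩
  choose c hc using hex
  have hU : ∀ (A : {A // A ∈ S}) v, v ∈ A.1 → v ∈ S.biUnion id := fun A v hv =>
    Finset.mem_biUnion.2 ⟨A.1, A.2, hv⟩
  set G := starGr S c with hG
  have tri : ∀ A B C, G.Adj A B → G.Adj B C → G.Adj A C → False := by
    rintro A B C ⟨nAB, v, vA, vB, hv⟩ ⟨nBC, w, wB, wC, hw⟩ ⟨nAC, t, tA, tC, ht⟩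
    obtain ⟨rfl, rfl⟩ := tri_eq hpart hlin h3 (hmem A) (hmem B) (hmem C) (hne nAB) (hne nBC)
      (hne nAC) vA vB wB wC tC tA
    grind
  have quad : QuadCond G (fun A B => (A.1 ∩ B.1).image part) := by
    refine ⟨fun A B => by simp only [Finset.inter_comm], ?_⟩
    rintro A B C D ⟨nAB, v, vA, vB, hv⟩ ⟨nBC, w, wB, wC, hw⟩ ⟨nCD, s, sC, sD, hs⟩
      ⟨nDA, t, tD, tA, ht⟩ nAC nBD
    have col : ∀ (A B : {A // A ∈ S}) v, A ≠ B → v ∈ A.1 → v ∈ B.1 →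
        (A.1 ∩ B.1).image part = {part v} := by
      intro A B v nAB vA vB
      have : A.1 ∩ B.1 = {v} := by
        ext x
        simp only [Finset.mem_inter, Finset.mem_singleton]
        constructor
        · rintro ⟨h1, h2⟩
          exact lin_uniq hlin (hmem A) (hmem B) (hne nAB) h1 h2 vA vB
        · rintro rfl
          exact ⟨vA, vB⟩
      rw [this, Finset.image_singleton]
    -- two consecutive labels are different
    have cons : ∀ (A B C D : {A // A ∈ S}) (v s t : V), A ≠ B → B ≠ C → C ≠ D → D ≠ A →
        A ≠ C → B ≠ D → v ∈ A.1 → v ∈ B.1 → v ∈ C.1 → s ∈ C.1 → s ∈ D.1 → t ∈ D.1 → t ∈ A.1 →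
        (A = c v ∨ B = c v) → (B = c v ∨ C = c v) → (C = c s ∨ D = c s) →
        (D = c t ∨ A = c t) → False := by
      intro A B C D v s t n1 n2 n3 n4 n5 n6 vA vB vC sC sD tD tA e1 e2 e3 e4
      obtain ⟨rfl, rfl⟩ := tri_eq hpart hlin h3 (hmem A) (hmem C) (hmem D) (hne n5) (hne n3)
        (hne n4.symm) vA vC sC sD tD tA
      grind
    have m1 : v ≠ w := by
      rintro rfl
      exact cons A B C D v s t nAB nBC nCD nDA nAC nBD vA vB wC sC sD tD tA hv hw hs ht
    have m2 : w ≠ s := by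
      rintro rfl
      exact cons B C D A w t v nBC nCD nDA nAB nBD nAC.symm wB wC sD tD tA vA vB hw hs ht hv
    have m3 : s ≠ t := by
      rintro rfl
      exact cons C D A B s v w nCD nDA nAB nBC nAC.symm nBD.symm sC sD tA vA vB wB wC hs ht hv hw
    have m4 : t ≠ v := by
      rintro rfl
      exact cons D A B C t w s nDA nAB nBC nCD nBD.symm nAC tD tA vB wB wC sC sD ht hv hw hs
    have m5 : v ≠ s := by
      rintro rfl
      exact m1 (lin_uniq hlin (hmem B) (hmem C) (hne nBC) vB sC wB wC)
    have m6 : w ≠ t := by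
      rintro rfl
      exact m1 (lin_uniq hlin (hmem A) (hmem B) (hne nAB) vA vB tA wB)
    have key := quad_eq hpart h4 (hmem A) (hmem B) (hmem C) (hmem D)
      ⟨hne nAB, hne nAC, hne nDA.symm, hne nBC, hne nBD, hne nCD⟩ vA vB wB wC sC sD tD tA
      ⟨m1, m5, m4.symm, m2, m6, m3⟩
    beta_reduce
    rw [col A B v nAB vA vB, col B C w nBC wB wC, col C D s nCD sC sD, col D A t nDA tD tA]
    simpa using key
  have bound := core_bound quad hW tri
  -- counting
  set U := S.biUnion id with hUdef
  set I : Finset (V × {A // A ∈ S}) := (U ×ˢ univ).filter fun p => p.1 ∈ p.2.1 with hI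
  have hIcard : I.card = 8 * r := by
    rw [hI, Finset.card_filter, Finset.sum_product_right]
    have : ∀ B : {A // A ∈ S}, (∑ v ∈ U, if v ∈ B.1 then 1 else 0) = r := by
      intro B
      rw [← Finset.card_filter, ← hcard B]
      congr 1
      ext v
      simp only [Finset.mem_filter]
      exact ⟨fun h => h.2, fun h => ⟨hU B v h, h⟩⟩
    rw [Finset.sum_congr rfl fun B _ => this B]
    simp [hS8]
  have hsplit := Finset.card_filter_add_card_filter_not (s := I) (fun p => p.2 = c p.1)
  have h1 : (I.filter fun p => p.2 = c p.1).card ≤ U.card := by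
    apply Finset.card_le_card_of_injOn Prod.fst
    · intro p hp
      simp [hI] at hp
      exact hp.1.1
    · rintro ⟨v, A⟩ hp ⟨w, B⟩ hq hvw
      simp at hp hq hvw
      grind
  set E : Finset ({A // A ∈ S} × {A // A ∈ S}) := univ.filter fun p =>
    p.1 ≠ p.2 ∧ ∃ v, v ∈ p.1.1 ∧ v ∈ p.2.1 ∧ p.1 = c v with hE
  have h2 : (I.filter fun p => ¬ p.2 = c p.1).card ≤ E.card := by
    apply Finset.card_le_card_of_injOn (fun p => (c p.1, p.2))
    · rintro ⟨v, B⟩ hp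
      simp only [hI, Finset.coe_filter, Finset.mem_filter, Finset.mem_product, Set.mem_ofPred_eq]
        at hp
      simp only [hE, Finset.coe_filter, Set.mem_ofPred_eq, Finset.mem_univ, true_and]
      exact ⟨fun e => hp.2 e.symm, v, hc v hp.1.1.1, hp.1.2, rfl⟩
    · rintro ⟨v, A⟩ hp ⟨w, B⟩ hq hvw
      simp only [hI, Finset.coe_filter, Finset.mem_filter, Finset.mem_product, Set.mem_ofPred_eq]
        at hp hq
      simp only [Prod.mk.injEq] at hvw
      obtain ⟨e1, rfl⟩ := hvw
      have := lin_uniq hlin (hmem (c v)) (hmem A) (hne fun e => hp.2 e.symm)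
        (hc v hp.1.1.1) hp.1.2 (e1 ▸ hc w hq.1.1.1) hq.1.2
      rw [this]
  have h5 : 2 * E.card ≤ ∑ A, ∑ B, bb G A B := by
    have hs : E.card = ∑ A, ∑ B, if (A, B) ∈ E then 1 else 0 := by
      rw [← Fintype.sum_prod_type' (f := fun A B => if (A, B) ∈ E then 1 else 0)]
      simp
    have hs' : E.card = ∑ A, ∑ B, if (B, A) ∈ E then 1 else 0 := by
      rw [hs, Finset.sum_comm]
    rw [two_mul]
    nth_rewrite 1 [hs]
    rw [hs', ← Finset.sum_add_distrib]
    refine Finset.sum_le_sum fun A _ => ?_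
    rw [← Finset.sum_add_distrib]
    refine Finset.sum_le_sum fun B _ => ?_
    have hno : ¬ ((A, B) ∈ E ∧ (B, A) ∈ E) := by
      simp only [hE, Finset.mem_filter, Finset.mem_univ, true_and]
      rintro ⟨⟨n, v, vA, vB, ev⟩, ⟨-, w, wB, wA, ew⟩⟩
      have := lin_uniq hlin (hmem A) (hmem B) (hne n) vA vB wA wB
      subst this
      exact n (ev.trans ew.symm)
    have hadj1 : (A, B) ∈ E → 1 ≤ bb G A B := by
      simp only [hE, Finset.mem_filter, Finset.mem_univ, true_and]
      rintro ⟨n, v, vA, vB, ev⟩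
      exact bb_pos.2 ⟨n, v, vA, vB, Or.inl ev⟩
    have hadj2 : (B, A) ∈ E → 1 ≤ bb G A B := by
      simp only [hE, Finset.mem_filter, Finset.mem_univ, true_and]
      rintro ⟨n, v, vB, vA, ev⟩
      exact bb_pos.2 ⟨n.symm, v, vA, vB, Or.inr ev⟩
    split_ifs with i1 i2 i2
    · exact absurd ⟨i1, i2⟩ hno
    · exact hadj1 i1
    · exact hadj2 i2
    · exact Nat.zero_le _
  omega
end

section
/- For every integer r ≥ 4 and every real ε > 0 there exists N such that for every integer n ≥ N there exist an r-element set R ⊆ {1, …, n} and an R_4-sum-free set M ⊆ {1, …, n} with |M| > n^{1−ε}. -/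
open Finset

/-- `M` is `R_L`-sum-free: for every `3 ≤ l ≤ L` and every sequence `b₁, …, b_l` of `l`
distinct elements of `R`, the only solutions in `M` of
`(b₂−b₁)m₁ + (b₃−b₂)m₂ + ⋯ + (b₁−b_l)m_l = 0` (over `ℤ`) are the trivial ones
`m₁ = ⋯ = m_l`. -/
def RLSumFree (R : Finset ℕ) (L : ℕ) (M : Finset ℕ) : Prop :=
  ∀ l : ℕ, 3 ≤ l → l ≤ L →
    ∀ b : Fin l → ℕ, Function.Injective b → (∀ i, b i ∈ R) →
      ∀ m : Fin l → ℕ, (∀ i, m i ∈ M) →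
        (∑ i : Fin l, ((b (finRotate l i) : ℤ) - (b i : ℤ)) * (m i : ℤ)) = 0 →
        ∀ i j, m i = m j


open Polynomial in
lemma aux_digit (t : ℤ) (n : ℕ) : ∀ p : ℤ[X], (∀ j, |p.coeff j| < t) → p.eval t = 0 →
    p.coeff n = 0 := by
  induction n with
  | zero =>
    intro p h h0
    have h1 := p.divX_mul_X_add
    have h2 : t ∣ p.coeff 0 := by
      rw [← h1] at h0
      simp only [eval_add, eval_mul, eval_X, eval_C] at h0
      exact ⟨-(p.divX.eval t), by linarith⟩
    exact Int.eq_zero_of_abs_lt_dvd h2 (h 0)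
  | succ n ih =>
    intro p h h0
    have h1 := p.divX_mul_X_add
    have h00 : p.coeff 0 = 0 := by
      have h2 : t ∣ p.coeff 0 := by
        rw [← h1] at h0
        simp only [eval_add, eval_mul, eval_X, eval_C] at h0
        exact ⟨-(p.divX.eval t), by linarith⟩
      exact Int.eq_zero_of_abs_lt_dvd h2 (h 0)
    have ht : 0 < t := lt_of_le_of_lt (abs_nonneg _) (h 0)
    have h3 := ih p.divX (fun j => by rw [coeff_divX]; exact h _) (by
      rw [← h1] at h0
      simp only [eval_add, eval_mul, eval_X, eval_C, h00, add_zero] at h0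
      rcases mul_eq_zero.1 h0 with h | h
      · exact h
      · omega)
    rwa [coeff_divX] at h3

open Polynomial in
lemma aux_digit' (t : ℤ) (p : ℤ[X]) (h : ∀ j, |p.coeff j| < t) (h0 : p.eval t = 0) : p = 0 := by
  ext n; simpa using aux_digit t n p h h0

open Polynomial in
noncomputable def auxMk {k : ℕ} (f : Fin k → ℤ) : ℤ[X] := ∑ j, C (f j) * X ^ (j : ℕ)

open Polynomial in
lemma auxMk_coeff {k : ℕ} (f : Fin k → ℤ) (n : ℕ) :
    (auxMk f).coeff n = if h : n < k then f ⟨n, h⟩ else 0 := by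
  simp only [auxMk, finsetSum_coeff, coeff_C_mul, coeff_X_pow]
  split_ifs with h
  · rw [Finset.sum_eq_single ⟨n, h⟩]
    · simp
    · intro j _ hj
      have : n ≠ j := fun e => hj (Fin.ext e.symm)
      simp [this]
    · simp
  · apply Finset.sum_eq_zero
    intro j _
    have : n ≠ j := by have := j.2; omega
    simp [this]

lemma auxMk_eval {k : ℕ} (f : Fin k → ℤ) (t : ℤ) :
    (auxMk f).eval t = ∑ j, f j * t ^ (j : ℕ) := by
  simp [auxMk, Polynomial.eval_finsetSum]

lemma auxMk_inj {k : ℕ} {f g : Fin k → ℤ} (h : auxMk f = auxMk g) : f = g := by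
  ext j
  have := congrArg (fun p => p.coeff j) h
  simpa [auxMk_coeff] using this

lemma aux_vec {k : ℕ} (f : Fin k → ℤ) (t : ℤ) (ht : 0 < t) (hf : ∀ j, |f j| < t)
    (h : ∑ j, f j * t ^ (j : ℕ) = 0) : f = 0 := by
  have h1 : auxMk f = 0 := by
    apply aux_digit' t _ _ (by rw [auxMk_eval, h])
    intro j
    rw [auxMk_coeff]
    split_ifs
    · exact hf _
    · simpa using ht
  apply auxMk_inj
  rw [h1]; simp [auxMk]

open Polynomial in
lemma aux_polys (r : ℕ) : ∃ b : Fin r → ℤ[X], (∀ i t, 0 ≤ (b i).eval t) ∧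
    ∀ f : Fin r → Fin 4, ∃ x : ℤ, ∀ i j, f i < f j → (b i).eval x < (b j).eval x := by
  classical
  let e := Fintype.equivFin (Fin r → Fin 4)
  let x : (Fin r → Fin 4) → ℤ := fun f => ((e f : ℕ) : ℤ)
  have hx : Function.Injective x := by
    intro f g h
    apply e.injective
    apply Fin.ext
    simpa [x] using h
  let Q : (Fin r → Fin 4) → ℤ[X] := fun f => ∏ g ∈ Finset.univ.erase f, (X - C (x g)) ^ 2
  have hQ0 : ∀ f t, 0 ≤ (Q f).eval t := by
    intro f t
    simp only [Q, eval_prod, eval_pow]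
    exact Finset.prod_nonneg fun _ _ => sq_nonneg _
  have hQ1 : ∀ f, 0 < (Q f).eval (x f) := by
    intro f
    simp only [Q, eval_prod, eval_pow, eval_sub, eval_X, eval_C]
    apply Finset.prod_pos
    intro g hg
    have : x f ≠ x g := fun h => (Finset.ne_of_mem_erase hg) (hx h).symm
    have := sub_ne_zero.2 this
    positivity
  have hQ2 : ∀ f g, g ≠ f → (Q g).eval (x f) = 0 := by
    intro f g hg
    simp only [Q, eval_prod, eval_pow, eval_sub, eval_X, eval_C]
    apply Finset.prod_eq_zero (i := f)
    · simp [hg.symm]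
    · simp
  refine ⟨fun i => ∑ f, C (((f i : ℕ) : ℤ)) * Q f, ?_, ?_⟩
  · intro i t
    simp only [eval_finsetSum, eval_mul, eval_C]
    exact Finset.sum_nonneg fun f _ => mul_nonneg (by positivity) (hQ0 f t)
  · intro f
    refine ⟨x f, ?_⟩
    have key : ∀ i, (∑ g, C (((g i : ℕ) : ℤ)) * Q g).eval (x f) = (f i : ℕ) * (Q f).eval (x f) := by
      intro i
      simp only [eval_finsetSum, eval_mul, eval_C]
      rw [Finset.sum_eq_single f]
      · intro g _ hg
        rw [hQ2 f g hg, mul_zero]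
      · simp
    intro i j hij
    simp only [key]
    have := hQ1 f
    have h2 : ((f i : ℕ) : ℤ) < ((f j : ℕ) : ℤ) := by exact_mod_cast hij
    exact mul_lt_mul_of_pos_right h2 this

open Polynomial in
lemma aux_core {l D : ℕ} (β : Fin (l+1) → ℤ[X]) (hs : ∑ i, β i = 0) (x : ℤ)
    (hpos : ∀ i, i ≠ Fin.last l → 0 < (β i).eval x) (V : Fin (l+1) → Fin D → ℤ[X])
    (hN : ∀ i, ∑ c, V i c ^ 2 = ∑ c, V (Fin.last l) c ^ 2)
    (h : ∀ c, ∑ i, β i * V i c = 0) : ∀ i c, V i c = V (Fin.last l) c := by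
  have key : ∑ i, β i * ∑ c, (V i c - V (Fin.last l) c) ^ 2 = 0 := by
    have h1 : ∀ i, ∑ c, (V i c - V (Fin.last l) c) ^ 2 =
        2 * ∑ c, V (Fin.last l) c ^ 2 - 2 * ∑ c, V i c * V (Fin.last l) c := by
      intro i
      have : ∀ c, (V i c - V (Fin.last l) c) ^ 2 =
        V i c ^ 2 + V (Fin.last l) c ^ 2 - 2 * (V i c * V (Fin.last l) c) := fun c => by ring
      simp only [this, Finset.sum_sub_distrib, Finset.sum_add_distrib, hN i, ← Finset.mul_sum]
      ring
    simp only [h1, mul_sub, Finset.sum_sub_distrib]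
    rw [← Finset.sum_mul, hs, zero_mul, zero_sub, neg_eq_zero]
    have : ∀ i, β i * (2 * ∑ c, V i c * V (Fin.last l) c) =
        ∑ c, 2 * V (Fin.last l) c * (β i * V i c) := by
      intro i
      rw [Finset.mul_sum, Finset.mul_sum]
      apply Finset.sum_congr rfl
      intros; ring
    simp only [this]
    rw [Finset.sum_comm]
    simp only [← Finset.mul_sum, h, mul_zero, Finset.sum_const_zero]
  have hnb : ∀ᶠ y : ℝ in nhds (x : ℝ), ∀ i, i ≠ Fin.last l → 0 < aeval y (β i) := by
    rw [Filter.eventually_all]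
    intro i
    by_cases hi : i = Fin.last l
    · simp [hi]
    · have h1 : 0 < aeval (x : ℝ) (β i) := by
        have := hpos i hi
        have e : aeval (x : ℝ) (β i) = (((β i).eval x : ℤ) : ℝ) := by
          have := Polynomial.aeval_algebraMap_apply ℝ x (β i)
          simpa using this
        rw [e]; exact_mod_cast this
      have hc : Continuous fun y : ℝ => aeval y (β i) := by fun_prop
      filter_upwards [hc.continuousAt.eventually (lt_mem_nhds h1)] with y hy _ using hy
  have hinf := infinite_of_mem_nhds _ hnb
  intro i c
  by_cases hi : i = Fin.last l
  · rw [hi]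
  rw [← sub_eq_zero]
  have hz : (V i c - V (Fin.last l) c).map (Int.castRingHom ℝ) = 0 := by
    apply Polynomial.eq_zero_of_infinite_isRoot
    refine hinf.mono ?_
    intro y hy
    simp only [Set.mem_ofPred_eq] at hy ⊢
    have k1 := congrArg (aeval y) key
    simp only [map_sum, map_mul, map_pow, map_zero] at k1
    have nn : ∀ j ∈ Finset.univ, 0 ≤ aeval y (β j) *
        ∑ c, (aeval y (V j c - V (Fin.last l) c)) ^ 2 := by
      intro j _
      by_cases hj : j = Fin.last l
      · simp [hj]
      · exact mul_nonneg (hy j hj).le (Finset.sum_nonneg fun _ _ => sq_nonneg _)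
    have k2 := (Finset.sum_eq_zero_iff_of_nonneg nn).1 k1 i (Finset.mem_univ _)
    have k3 := (mul_eq_zero.1 k2).resolve_left (hy i hi).ne'
    have k4 := (Finset.sum_eq_zero_iff_of_nonneg (fun _ _ => sq_nonneg _)).1 k3 c (Finset.mem_univ _)
    have k5 := pow_eq_zero_iff (two_ne_zero) |>.1 k4
    rw [IsRoot.def, eval_map]
    exact k5
  exact (Polynomial.map_eq_zero_iff (Int.cast_injective)).1 hz

lemma aux_count (ε : ℝ) (hε : 0 < ε) (hε1 : ε < 1) (g C : ℕ) (hC : 2 ≤ C) :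
    ∃ q : ℕ, 1 ≤ q ∧ ∃ D0 : ℕ, ∀ D : ℕ, D0 ≤ D →
      (((C : ℝ) ^ ((q+1)*(q+g+1))) ^ (D+1)) ^ (1-ε) * ((D * (C^q)^2 + 1 : ℕ) : ℝ) ^ (q*q)
        < (C : ℝ) ^ (q*q*D) := by
  obtain ⟨q, hq⟩ := exists_nat_ge ((2*g+3)/(ε/2) + 1)
  have hq1 : (1:ℝ) ≤ q := by
    have : 0 ≤ (2*g+3)/(ε/2) := by positivity
    linarith
  have hq2 : (2*g+3 : ℝ) ≤ ε/2 * q := by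
    have : (2*g+3)/(ε/2) ≤ (q:ℝ) := by linarith
    rw [div_le_iff₀ (by positivity)] at this
    linarith
  set E : ℕ := (q+1)*(q+g+1) with hE
  have hEq : (1-ε/2) * E ≤ (q:ℝ)*q := by
    have h1 : (E:ℝ) ≤ q*q + (2*g+3)*q := by
      rw [hE]; push_cast
      nlinarith [(Nat.cast_nonneg g : (0:ℝ) ≤ g)]
    nlinarith [(Nat.cast_nonneg g : (0:ℝ) ≤ g)]
  have hEpos : (0:ℝ) < E := by rw [hE]; positivity
  refine ⟨q, by exact_mod_cast hq1, ?_⟩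
  have hC1 : (1:ℝ) < C := by exact_mod_cast hC
  have hC0 : (0:ℝ) < C := by linarith
  set c : ℝ := (C:ℝ) ^ (ε/2*E) with hc
  have hc1 : 1 < c := Real.one_lt_rpow hC1 (by positivity)
  set K : ℝ := (C:ℝ) ^ (E*(1-ε)) * (((C:ℝ)^q)^2+1)^(q*q) with hK
  have hKpos : 0 < K := by positivity
  have ht := (tendsto_pow_const_div_const_pow_of_one_lt (q*q) hc1).const_mul K
  rw [mul_zero] at ht
  have hev := (ht.eventually (gt_mem_nhds (zero_lt_one))).and (Filter.eventually_ge_atTop 1)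
  obtain ⟨D0, hD0⟩ := Filter.eventually_atTop.1 hev
  refine ⟨D0, fun D hD => ?_⟩
  obtain ⟨h1, h2⟩ := hD0 D hD
  have hcD : 0 < c ^ D := by positivity
  rw [← mul_div_assoc, div_lt_one hcD] at h1
  have h2' : (1:ℝ) ≤ D := by exact_mod_cast h2
  have h3 : ((D * (C^q)^2 + 1 : ℕ) : ℝ) ^ (q*q) ≤ (((C:ℝ)^q)^2+1)^(q*q) * (D:ℝ)^(q*q) := by
    rw [← mul_pow]
    push_cast
    apply pow_le_pow_left₀ (by positivity)
    nlinarith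
  have h4 : (((C : ℝ) ^ E) ^ (D+1)) ^ (1-ε) = (C:ℝ) ^ (E*(1-ε)) * (C:ℝ)^(E*D*(1-ε)) := by
    rw [← Real.rpow_add hC0, ← pow_mul, ← Real.rpow_natCast, ← Real.rpow_mul hC0.le]
    congr 1; push_cast; ring
  have h5 : (C:ℝ)^(E*D*(1-ε)) * c ^ D ≤ (C : ℝ) ^ (q*q*D) := by
    rw [hc, ← Real.rpow_natCast (_ ^ _) D, ← Real.rpow_mul hC0.le, ← Real.rpow_add hC0,
      ← Real.rpow_natCast]
    apply Real.rpow_le_rpow_of_exponent_le hC1.le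
    push_cast
    have := mul_le_mul_of_nonneg_right hEq (by linarith : (0:ℝ) ≤ D)
    nlinarith
  calc _ ≤ (C:ℝ) ^ (E*(1-ε)) * (C:ℝ)^(E*D*(1-ε)) * ((((C:ℝ)^q)^2+1)^(q*q) * (D:ℝ)^(q*q)) := by
        rw [h4]; gcongr
    _ = (C:ℝ)^(E*D*(1-ε)) * (K * (D:ℝ)^(q*q)) := by rw [hK]; ring
    _ < (C:ℝ)^(E*D*(1-ε)) * c ^ D := by gcongr
    _ ≤ _ := h5

lemma aux_sumlt (t : ℕ) : ∀ (k : ℕ) (f : Fin k → ℕ), (∀ j, f j < t) →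
    ∑ j, f j * t ^ (j : ℕ) < t ^ k := by
  intro k
  induction k with
  | zero => intro f _; simp
  | succ k ih =>
    intro f hf
    rw [Fin.sum_univ_castSucc]
    have h1 := ih (fun j => f j.castSucc) (fun j => hf _)
    simp only [Fin.val_castSucc, Fin.val_last]
    have h2 : (f (Fin.last k) + 1) * t ^ k ≤ t * t ^ k := Nat.mul_le_mul_right _ (hf _)
    rw [pow_succ]
    nlinarith

def auxW {k s D : ℕ} (t : ℕ) (a : Fin D → Fin k → Fin s) (c : Fin D) : ℕ :=
  ∑ j, (a c j : ℕ) * t ^ (j : ℕ)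

def auxEnc {k s D : ℕ} (t B : ℕ) (a : Fin D → Fin k → Fin s) : ℕ :=
  1 + ∑ c, auxW t a c * B ^ (c : ℕ)

lemma auxW_lt {k s D : ℕ} (t : ℕ) (hst : s ≤ t) (a : Fin D → Fin k → Fin s) (c : Fin D) :
    auxW t a c < t ^ k :=
  aux_sumlt t k _ fun j => lt_of_lt_of_le (a c j).2 hst

lemma auxEnc_inj {k s D : ℕ} (t B : ℕ) (ht : 0 < t) (hst : s ≤ t) (hB : t ^ k ≤ B) :
    Function.Injective (auxEnc (k := k) (s := s) (D := D) t B) := by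
  intro a a' h
  have hBpos : 0 < B := lt_of_lt_of_le (pow_pos ht k) hB
  have h1 : (fun c => (auxW t a c : ℤ) - auxW t a' c) = 0 := by
    apply aux_vec _ (B : ℤ) (by exact_mod_cast hBpos)
    · intro c
      have := auxW_lt t hst a c
      have := auxW_lt t hst a' c
      rw [abs_lt]; constructor <;> omega
    · simp only [sub_mul, Finset.sum_sub_distrib]
      unfold auxEnc at h
      have h' := Nat.add_left_cancel h
      have h'' : ((∑ c, auxW t a c * B ^ (c : ℕ) : ℕ) : ℤ) =
        ((∑ c, auxW t a' c * B ^ (c : ℕ) : ℕ) : ℤ) := by rw [h']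
      push_cast at h''
      linarith
  funext c
  have h2 := congrFun h1 c
  simp only [Pi.zero_apply] at h2
  have h3 : (fun j => ((a c j : ℕ) : ℤ) - (a' c j : ℕ)) = 0 := by
    apply aux_vec _ (t : ℤ) (by exact_mod_cast ht)
    · intro j
      have := (a c j).2
      have := (a' c j).2
      rw [abs_lt]; constructor <;> omega
    · simp only [sub_mul, Finset.sum_sub_distrib]
      simp only [auxW] at h2
      push_cast at h2
      linarith
  funext j
  have h4 := congrFun h3 j
  simp only [Pi.zero_apply] at h4
  apply Fin.ext
  omega

noncomputable def auxA (p : Polynomial ℤ) : ℤ := ∑ n ∈ p.support, |p.coeff n|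

lemma auxA_nonneg (p : Polynomial ℤ) : 0 ≤ auxA p := Finset.sum_nonneg fun _ _ => abs_nonneg _

open Polynomial in
lemma auxA_coeff (p V : ℤ[X]) (s : ℤ) (hs : ∀ n, |V.coeff n| ≤ s) (n : ℕ) :
    |(p * V).coeff n| ≤ auxA p * s := by
  have hs0 : 0 ≤ s := (abs_nonneg _).trans (hs 0)
  conv_lhs => rw [p.as_sum_support_C_mul_X_pow]
  rw [Finset.sum_mul, finsetSum_coeff, auxA, Finset.sum_mul]
  refine (Finset.abs_sum_le_sum_abs _ _).trans (Finset.sum_le_sum fun i _ => ?_)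
  rw [mul_assoc, coeff_C_mul, coeff_X_pow_mul', abs_mul]
  apply mul_le_mul_of_nonneg_left _ (abs_nonneg _)
  split_ifs
  · exact hs _
  · simpa using hs0

open Polynomial in
lemma auxA_eval (p : ℤ[X]) (g : ℕ) (hg : p.natDegree ≤ g) (t : ℤ) (ht : 1 ≤ t) :
    |p.eval t| ≤ auxA p * t ^ g := by
  rw [eval_eq_sum, Polynomial.sum, auxA, Finset.sum_mul]
  refine (Finset.abs_sum_le_sum_abs _ _).trans (Finset.sum_le_sum fun i hi => ?_)
  rw [abs_mul, abs_of_nonneg (a := t ^ i) (by positivity)]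
  apply mul_le_mul_of_nonneg_left _ (abs_nonneg _)
  exact pow_le_pow_right₀ ht ((le_natDegree_of_mem_supp _ hi).trans hg)

open Polynomial in
lemma aux_free (r : ℕ) (b : Fin r → ℤ[X]) (hb0 : ∀ i t, 0 ≤ (b i).eval t)
    (hord : ∀ f : Fin r → Fin 4, ∃ x : ℤ, ∀ i j, f i < f j → (b i).eval x < (b j).eval x)
    (C g q D : ℕ) (hC : 2 ≤ C) (hA : ∀ i j, 4 * auxA (b j - b i) < C)
    (hg : ∀ i j, (b j - b i).natDegree ≤ g)
    (t B : ℕ) (ht : t = C ^ (q+1)) (hB : B = t ^ (q+g+1))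
    (S : Finset (Fin D → Fin q → Fin (C^q)))
    (hS : ∀ a ∈ S, ∀ a' ∈ S, ∀ j j', ∑ c, (a c j : ℕ) * (a c j' : ℕ) =
      ∑ c, (a' c j : ℕ) * (a' c j' : ℕ)) :
    RLSumFree (Finset.univ.image fun i => ((b i).eval (t:ℤ)).toNat + 1) 4
      (S.image (auxEnc t B)) := by
  intro l hl3 hl4 bb hinj hR m hM hsum
  obtain ⟨l, rfl⟩ : ∃ l', l = l' + 1 := ⟨l - 1, by omega⟩
  have ht1 : 1 ≤ t := by rw [ht]; exact Nat.one_le_pow _ _ (by omega)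
  have hst : C ^ q ≤ t := by rw [ht]; exact Nat.pow_le_pow_right (by omega) (by omega)
  have hCt : C ≤ t := by rw [ht]; exact Nat.le_self_pow (by omega) _
  have hR' : ∀ i, ∃ c, ((b c).eval (t:ℤ)).toNat + 1 = bb i := by
    intro i; simpa using hR i
  have hM' : ∀ i, ∃ a, a ∈ S ∧ auxEnc t B a = m i := by
    intro i; simpa using hM i
  choose c hc using hR'
  choose a haS ha using hM'
  have hcinj : Function.Injective c := by
    intro i j h
    apply hinj
    rw [← hc, ← hc, h]
  suffices H : ∀ i, a i = a (Fin.last l) by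
    intro i j
    rw [← ha i, ← ha j, H i, H j]
  classical
  let f : Fin r → Fin 4 := fun x => if h : ∃ i, c i = x then Fin.castLE hl4 h.choose else 0
  have hf : ∀ i, f (c i) = Fin.castLE hl4 i := by
    intro i
    have h : ∃ i', c i' = c i := ⟨i, rfl⟩
    simp only [f, dif_pos h]
    congr 1
    exact hcinj h.choose_spec
  obtain ⟨x, hx⟩ := hord f
  let β : Fin (l+1) → ℤ[X] := fun i => b (c (finRotate _ i)) - b (c i)
  have hβs : ∑ i, β i = 0 := by
    simp only [β, Finset.sum_sub_distrib]
    rw [Equiv.sum_comp (finRotate (l+1)) (fun i => b (c i)), sub_self]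
  have hpos : ∀ i, i ≠ Fin.last l → 0 < (β i).eval x := by
    intro i hi
    simp only [β, eval_sub, sub_pos]
    apply hx
    rw [hf, hf]
    have : i < finRotate _ i := by
      rw [finRotate_apply, Fin.lt_add_one_iff]
      exact Fin.lt_last_iff_ne_last.2 hi
    exact this
  let V : Fin (l+1) → Fin D → ℤ[X] := fun i d => auxMk fun j => ((a i d j : ℕ) : ℤ)
  have hVe : ∀ i d, (V i d).eval (t:ℤ) = auxW t (a i) d := by
    intro i d
    simp [V, auxMk_eval, auxW]
  have hAs : ∑ i, auxA (β i) < C := by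
    have h1 : ∑ i, 4 * auxA (β i) < ∑ i : Fin (l+1), (C:ℤ) :=
      Finset.sum_lt_sum_of_nonempty Finset.univ_nonempty fun i _ => hA _ _
    rw [← Finset.mul_sum] at h1
    simp only [Finset.sum_const, Finset.card_univ, Fintype.card_fin, nsmul_eq_mul] at h1
    have : ((l + 1 : ℕ) : ℤ) ≤ 4 := by exact_mod_cast hl4
    nlinarith
  have hAs0 : 0 ≤ ∑ i, auxA (β i) := Finset.sum_nonneg fun i _ => auxA_nonneg _
  have htz : (1:ℤ) ≤ t := by exact_mod_cast ht1
  have hsum2 : ∑ d, (∑ i, (β i).eval (t:ℤ) * auxW t (a i) d) * (B:ℤ) ^ (d:ℕ) = 0 := by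
    have h1 : ∀ i, ((bb (finRotate _ i) : ℤ) - (bb i : ℤ)) = (β i).eval (t:ℤ) := by
      intro i
      rw [← hc, ← hc]
      push_cast
      rw [Int.toNat_of_nonneg (hb0 _ _), Int.toNat_of_nonneg (hb0 _ _)]
      simp [β]
    have h2 : ∀ i, (m i : ℤ) = 1 + ∑ d, (auxW t (a i) d : ℤ) * (B:ℤ) ^ (d:ℕ) := by
      intro i
      rw [← ha, auxEnc]; push_cast; rfl
    simp only [h1, h2, mul_add, mul_one, Finset.sum_add_distrib] at hsum
    rw [← eval_finsetSum, hβs, eval_zero, zero_add] at hsum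
    simp only [Finset.mul_sum, Finset.sum_mul] at hsum ⊢
    rw [Finset.sum_comm]
    simpa only [mul_assoc] using hsum
  have hz : (fun d => ∑ i, (β i).eval (t:ℤ) * auxW t (a i) d) = 0 := by
    apply aux_vec _ (B:ℤ) _ _ hsum2
    · rw [hB]; positivity
    · intro d
      have h1 : |∑ i, (β i).eval (t:ℤ) * auxW t (a i) d| ≤
          ∑ i, auxA (β i) * ((t:ℤ) ^ g * t ^ q) := by
        refine (Finset.abs_sum_le_sum_abs _ _).trans (Finset.sum_le_sum fun i _ => ?_)
        rw [abs_mul, ← mul_assoc]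
        apply mul_le_mul (auxA_eval _ g (hg _ _) _ htz) _ (abs_nonneg _)
          (mul_nonneg (auxA_nonneg _) (by positivity))
        rw [abs_of_nonneg (by positivity)]
        exact_mod_cast (auxW_lt t hst (a i) d).le
      rw [← Finset.sum_mul] at h1
      refine lt_of_le_of_lt h1 ?_
      have h2 : (∑ i, auxA (β i)) * ((t:ℤ) ^ g * t ^ q) < t * ((t:ℤ) ^ g * t ^ q) := by
        apply mul_lt_mul_of_pos_right _ (by positivity)
        have : (C:ℤ) ≤ t := by exact_mod_cast hCt
        linarith
      refine h2.trans_eq ?_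
      rw [hB]; push_cast; ring
  have hP : ∀ d, ∑ i, β i * V i d = 0 := by
    intro d
    apply aux_digit' (t:ℤ)
    · intro n
      rw [finsetSum_coeff]
      have h1 : |∑ i, (β i * V i d).coeff n| ≤ ∑ i, auxA (β i) * ((C:ℤ) ^ q) := by
        refine (Finset.abs_sum_le_sum_abs _ _).trans (Finset.sum_le_sum fun i _ => ?_)
        apply auxA_coeff
        intro n
        simp only [V, auxMk_coeff]
        split_ifs with h
        · rw [abs_of_nonneg (by positivity)]
          exact_mod_cast (a i d ⟨n, h⟩).2.le
        · simp
      rw [← Finset.sum_mul] at h1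
      refine lt_of_le_of_lt h1 ?_
      rw [ht]; push_cast; rw [pow_succ, mul_comm]
      apply mul_lt_mul_of_pos_left hAs (by positivity)
    · rw [eval_finsetSum]
      simp only [eval_mul, hVe]
      exact congrFun hz d
  have hN : ∀ i, ∑ d, V i d ^ 2 = ∑ d, V (Fin.last l) d ^ 2 := by
    have key : ∀ i, ∑ d, V i d ^ 2 = ∑ j, ∑ j',
        Polynomial.C ((∑ d, (a i d j : ℕ) * (a i d j' : ℕ) : ℕ) : ℤ) * X ^ ((j:ℕ) + j') := by
      intro i
      have e : ∀ d, V i d ^ 2 = ∑ j, ∑ j',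
        Polynomial.C (((a i d j : ℕ) * (a i d j' : ℕ) : ℕ) : ℤ) * X ^ ((j:ℕ) + j') := by
        intro d
        simp only [V, auxMk, sq]
        rw [Finset.sum_mul_sum]
        refine Finset.sum_congr rfl fun j _ => Finset.sum_congr rfl fun j' _ => ?_
        push_cast
        rw [Polynomial.C_mul, pow_add]; ring
      simp only [e]
      rw [Finset.sum_comm]
      refine Finset.sum_congr rfl fun j _ => ?_
      rw [Finset.sum_comm]
      refine Finset.sum_congr rfl fun j' _ => ?_
      rw [← Finset.sum_mul, Nat.cast_sum, map_sum]
    intro i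
    rw [key, key]
    simp only [hS _ (haS i) _ (haS (Fin.last l))]
  have hfin := aux_core β hβs x hpos V hN hP
  intro i
  funext d j
  have h1 := congrFun (auxMk_inj (hfin i d)) j
  apply Fin.ext
  exact_mod_cast h1

lemma aux_bdd {r : ℕ} (d : Fin r → Fin r → ℕ) : ∃ g, ∀ i j, d i j ≤ g :=
  ⟨Finset.univ.sup fun p : Fin r × Fin r => d p.1 p.2, fun i j =>
    Finset.le_sup (f := fun p : Fin r × Fin r => d p.1 p.2) (Finset.mem_univ (i, j))⟩

theorem exists_large_R4_sum_free (r : ℕ) (hr : 4 ≤ r) (ε : ℝ) (hε : 0 < ε) :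
    ∃ N : ℕ, ∀ n : ℕ, N ≤ n →
      ∃ R ⊆ Finset.Icc 1 n, R.card = r ∧
        ∃ M ⊆ Finset.Icc 1 n, RLSumFree R 4 M ∧ (n : ℝ) ^ ((1 : ℝ) - ε) < (M.card : ℝ) := by
  classical
  obtain ⟨b, hb0, hord⟩ := aux_polys r
  set ε' := min ε (1/2) with hε'
  have hε0 : 0 < ε' := lt_min hε (by norm_num)
  have hε1 : ε' < 1 := lt_of_le_of_lt (min_le_right _ _) (by norm_num)
  obtain ⟨C, hC, hA⟩ : ∃ C : ℕ, 2 ≤ C ∧ ∀ i j, 4 * auxA (b j - b i) < C := by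
    refine ⟨(4 * ∑ p : Fin r × Fin r, auxA (b p.2 - b p.1)).toNat + 2, by omega, ?_⟩
    intro i j
    have h1 := Finset.single_le_sum (f := fun p : Fin r × Fin r => auxA (b p.2 - b p.1))
      (fun p _ => auxA_nonneg _) (Finset.mem_univ (i, j))
    simp only at h1
    have := Int.self_le_toNat (4 * ∑ p : Fin r × Fin r, auxA (b p.2 - b p.1))
    push_cast
    linarith
  obtain ⟨g, hg⟩ : ∃ g : ℕ, ∀ i j, (b j - b i).natDegree ≤ g :=
    aux_bdd fun i j => (b j - b i).natDegree
  obtain ⟨q, hq, D0, hD0⟩ := aux_count ε' hε0 hε1 g C hC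
  obtain ⟨t, ht⟩ : ∃ t, t = C ^ (q+1) := ⟨_, rfl⟩
  obtain ⟨B, hB⟩ : ∃ B, B = t ^ (q+g+1) := ⟨_, rfl⟩
  have hst : C ^ q ≤ t := by rw [ht]; exact Nat.pow_le_pow_right (by omega) (by omega)
  have hCt : C ≤ t := by rw [ht]; exact Nat.le_self_pow (by omega) _
  have hB2 : 1 < B := by
    rw [hB]; exact Nat.one_lt_pow (by omega) (by omega)
  have hBq : t ^ q ≤ B := by rw [hB]; exact Nat.pow_le_pow_right (by omega) (by omega)
  let R : Finset ℕ := Finset.univ.image fun i => ((b i).eval (t:ℤ)).toNat + 1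
  have hRcard : R.card = r := by
    rw [Finset.card_image_of_injective, Finset.card_univ, Fintype.card_fin]
    intro i j hij
    simp only [Nat.add_right_cancel_iff] at hij
    have h1 : (b j - b i).eval (t:ℤ) = 0 := by
      rw [Polynomial.eval_sub, ← Int.toNat_of_nonneg (hb0 i t), ← Int.toNat_of_nonneg (hb0 j t), hij, sub_self]
    have h2 : b j - b i = 0 := by
      apply aux_digit' (t:ℤ) _ _ h1
      intro n
      have h3 := auxA_coeff (b j - b i) 1 1 (by
        intro n; rw [Polynomial.coeff_one]; split_ifs <;> simp) n
      rw [mul_one, mul_one] at h3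
      have h4 := hA i j
      have h5 := auxA_nonneg (b j - b i)
      have : (C:ℤ) ≤ t := by exact_mod_cast hCt
      linarith
    by_contra hne
    obtain ⟨x, hx⟩ := hord (fun k => if k = j then 1 else 0)
    have h6 := hx i j (by simp [hne])
    rw [sub_eq_zero.1 h2] at h6
    exact lt_irrefl _ h6
  refine ⟨max (B ^ D0) (R.sup id), fun n hn => ?_⟩
  have hnR : R.sup id ≤ n := (le_max_right _ _).trans hn
  have hnB : B ^ D0 ≤ n := (le_max_left _ _).trans hn
  have hn0 : n ≠ 0 := by
    have : 0 < B ^ D0 := by positivity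
    omega
  refine ⟨R, ?_, hRcard, ?_⟩
  · intro y hy
    rw [Finset.mem_Icc]
    refine ⟨?_, (Finset.le_sup (f := id) hy).trans hnR⟩
    simp only [R, Finset.mem_image] at hy
    obtain ⟨i, _, rfl⟩ := hy
    omega
  set D := Nat.log B n with hD
  have hDD : D0 ≤ D := Nat.le_log_of_pow_le hB2 hnB
  have hDn : B ^ D ≤ n := Nat.pow_log_le_self B hn0
  have hnD : n < B ^ (D+1) := Nat.lt_pow_succ_log_self hB2 n
  let s := C ^ q
  let G : (Fin D → Fin q → Fin (C^q)) → (Fin q × Fin q → Fin (D * (C^q)^2 + 1)) := fun a p =>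
    ⟨∑ c, (a c p.1 : ℕ) * (a c p.2 : ℕ), by
      have : ∑ c, (a c p.1 : ℕ) * (a c p.2 : ℕ) ≤ ∑ c : Fin D, (C^q)^2 := by
        apply Finset.sum_le_sum
        intro c _
        rw [sq]
        exact Nat.mul_le_mul (a c p.1).2.le (a c p.2).2.le
      simp at this
      omega⟩
  have hpig : ∃ y, C^(q*q*D) ≤ (D * (C^q)^2 + 1)^(q*q) * (Finset.univ.filter fun a => G a = y).card := by
    by_contra hcon
    push Not at hcon
    have h1 : ∑ y, (Finset.univ.filter fun a => G a = y).card = C^(q*q*D) := by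
      rw [← Finset.card_eq_sum_card_fiberwise (fun _ _ => Finset.mem_coe.2 (Finset.mem_univ _))]
      simp [Fintype.card_fin, ← pow_mul]
    have h2 : ∑ y : Fin q × Fin q → Fin (D * (C^q)^2 + 1),
        (D * (C^q)^2 + 1)^(q*q) * (Finset.univ.filter fun a => G a = y).card <
        ∑ y : Fin q × Fin q → Fin (D * (C^q)^2 + 1), C^(q*q*D) :=
      Finset.sum_lt_sum_of_nonempty Finset.univ_nonempty fun y _ => hcon y
    rw [← Finset.mul_sum, h1] at h2
    simp [Fintype.card_fin] at h2
  obtain ⟨y, hy⟩ := hpig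
  set S := Finset.univ.filter fun a => G a = y with hSdef
  have hS : ∀ a ∈ S, ∀ a' ∈ S, ∀ j j', ∑ c, (a c j : ℕ) * (a c j' : ℕ) =
      ∑ c, (a' c j : ℕ) * (a' c j' : ℕ) := by
    intro a ha a' ha' j j'
    have e1 : G a = y := by simpa [S] using ha
    have e2 : G a' = y := by simpa [S] using ha'
    have := congrArg Fin.val (congrFun (e1.trans e2.symm) (j, j'))
    exact this
  refine ⟨S.image (auxEnc t B), ?_, aux_free r b hb0 hord C g q D hC hA hg t B ht hB S hS, ?_⟩
  · intro z hz
    simp only [Finset.mem_image] at hz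
    obtain ⟨a, _, rfl⟩ := hz
    rw [Finset.mem_Icc]
    have h1 : ∑ c, auxW t a c * B ^ (c : ℕ) < B ^ D :=
      aux_sumlt B D _ fun c => (auxW_lt t hst a c).trans_le hBq
    unfold auxEnc
    omega
  · rw [Finset.card_image_of_injective _ (auxEnc_inj t B (by omega) hst hBq)]
    have hc := hD0 D hDD
    have hn1 : (1:ℝ) ≤ n := by exact_mod_cast Nat.one_le_iff_ne_zero.2 hn0
    have h1 : (n:ℝ) ^ (1-ε) ≤ (n:ℝ) ^ (1-ε') :=
      Real.rpow_le_rpow_of_exponent_le hn1 (by linarith [min_le_left ε (1/2)])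
    have h2 : (n:ℝ) ^ (1-ε') ≤ (((C : ℝ) ^ ((q+1)*(q+g+1))) ^ (D+1)) ^ (1-ε') := by
      apply Real.rpow_le_rpow (by positivity) _ (by linarith)
      have : B = C ^ ((q+1)*(q+g+1)) := by rw [hB, ht, pow_mul]
      rw [this] at hnD
      exact_mod_cast hnD.le
    have hy' : (C:ℝ)^(q*q*D) ≤ ((D * (C^q)^2 + 1 : ℕ):ℝ)^(q*q) * (S.card : ℝ) := by
      exact_mod_cast hy
    have hpos : (0:ℝ) < ((D * (C^q)^2 + 1 : ℕ):ℝ)^(q*q) := by positivity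
    have h3 := hc.trans_le hy'
    rw [mul_comm] at h3
    have h4 := lt_of_mul_lt_mul_left h3 hpos.le
    linarith
end
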